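/- (Proposition 3.1, period-2 autocovariance) Let d : ℤ → ℝ be 2-periodic with 0 < d_t < 1/2 for all t, let σ_i > 0, set ψ_j(d) = Γ(j+d)/(Γ(j+1)·Γ(d)), and for i ∈ {1, 2} and a natural number h define γ_X^i(h) = σ_i² ∑_{j=0}^∞ ψ_j(d_i)·ψ_{j+h}(d_{i+h}). Then γ_X^i(h) = σ_i² · Γ(1-d_i-d_{i+1})·Γ(d_{i+1}+h) / (Γ(d_{i+1})·Γ(1-d_{i+1})·Γ(1+h-d_i)) if h is odd, and γ_X^i(h) = σ_i² · Γ(1-2d_i)·Γ(d_i+h) / (Γ(d_i)·Γ(1-d_i)·Γ(1+h-d_i)) if h is even. -/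

import Mathlib

open Real

lemma aux_Gamma_poch (a : ℝ) (ha : 0 < a) (n : ℕ) :
    Real.Gamma (n + a) = Real.Gamma a * (ascPochhammer ℝ n).eval a := by
  induction n with
  | zero => simp
  | succ n ih =>
    rw [ascPochhammer_succ_eval, ← mul_assoc, ← ih]
    have h : ((n : ℝ) + a) ≠ 0 := by positivity
    rw [show ((n + 1 : ℕ) : ℝ) + a = (n + a) + 1 by push_cast; ring, Real.Gamma_add_one h]
    ring

lemma aux_choose (a : ℝ) (ha : 0 < a) (n : ℕ) :
    Ring.choose (a + n - 1) n = Real.Gamma (n + a) / (Real.Gamma (n + 1) * Real.Gamma a) := by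
  rw [← Ring.multichoose_eq, aux_Gamma_poch a ha, Real.Gamma_nat_eq_factorial]
  have h := Ring.factorial_nsmul_multichoose_eq_ascPochhammer a n
  rw [Polynomial.ascPochhammer_smeval_eq_eval, nsmul_eq_mul] at h
  have h1 := (Real.Gamma_pos_of_pos ha).ne'
  have h2 : (n.factorial : ℝ) ≠ 0 := by positivity
  rw [← h]
  field_simp

lemma aux_binom (a : ℝ) (ha : 0 < a) (x : ℝ) (hx0 : 0 < x) (hx1 : x < 1) :
    HasSum (fun n : ℕ => Real.Gamma (n + a) / (Real.Gamma (n + 1) * Real.Gamma a) * x ^ n)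
      ((1 - x) ^ (-a)) := by
  have h := (Real.one_div_one_sub_rpow_hasFPowerSeriesOnBall_zero a).hasSum (y := x) (by
    simp [Metric.mem_eball, edist_dist, abs_of_pos hx0, hx1])
  rw [Real.rpow_neg (by linarith), ← one_div]
  simpa [FormalMultilinearSeries.ofScalars_apply_eq, aux_choose a ha, mul_comm] using h

lemma aux_beta_integrable (u v : ℝ) (hu : 0 < u) (hv : 0 < v) :
    MeasureTheory.IntegrableOn (fun x : ℝ => x ^ (u - 1) * (1 - x) ^ (v - 1)) (Set.Ioo 0 1) ∧
    ∫ x in Set.Ioo (0 : ℝ) 1, x ^ (u - 1) * (1 - x) ^ (v - 1)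
      = Real.Gamma u * Real.Gamma v / Real.Gamma (u + v) := by
  have hc := Complex.betaIntegral_convergent (u := u) (v := v) (by simpa) (by simpa)
  rw [intervalIntegrable_iff_integrableOn_Ioo_of_le zero_le_one] at hc
  have key : ∀ x ∈ Set.Ioo (0 : ℝ) 1,
      RCLike.re ((x : ℂ) ^ ((u : ℂ) - 1) * (1 - (x : ℂ)) ^ ((v : ℂ) - 1)) =
      x ^ (u - 1) * (1 - x) ^ (v - 1) := by
    intro x ⟨hx1, hx2⟩
    norm_cast
    rw [← Complex.ofReal_cpow, ← Complex.ofReal_cpow, RCLike.re_to_complex,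
        Complex.re_mul_ofReal, Complex.ofReal_re]
    all_goals linarith
  refine ⟨?_, ?_⟩
  · exact (MeasureTheory.integrableOn_congr_fun key measurableSet_Ioo).1 hc.re
  · have h2 := ProbabilityTheory.beta_eq_betaIntegralReal u v hu hv
    rw [ProbabilityTheory.beta] at h2
    rw [h2, Complex.betaIntegral, intervalIntegral.integral_of_le zero_le_one,
      MeasureTheory.integral_Ioc_eq_integral_Ioo, ← RCLike.re_to_complex, ← integral_re hc]
    exact (MeasureTheory.setIntegral_congr_fun measurableSet_Ioo key).symm

lemma aux_main (a b : ℝ) (ha : 0 < a) (hb : 0 < b) (ha2 : a < 1 / 2) (hb2 : b < 1 / 2) (h : ℕ) :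
    ∑' j : ℕ, (Real.Gamma (j + a) / (Real.Gamma (j + 1) * Real.Gamma a)) *
        (Real.Gamma ((j + h : ℕ) + b) / (Real.Gamma ((j + h : ℕ) + 1) * Real.Gamma b)) =
      Real.Gamma (1 - a - b) * Real.Gamma (b + h) /
          (Real.Gamma b * Real.Gamma (1 - b) * Real.Gamma (1 + h - a)) := by
  have hGb := (Real.Gamma_pos_of_pos hb).ne'
  have hG1b := (Real.Gamma_pos_of_pos (show 0 < 1 - b by linarith)).ne'
  set c : ℕ → ℝ := fun j => Real.Gamma (j + a) / (Real.Gamma (j + 1) * Real.Gamma a) with hc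
  have hc0 : ∀ j, 0 ≤ c j := fun j => by
    have := Real.Gamma_pos_of_pos ha
    have := Real.Gamma_pos_of_pos (show (0 : ℝ) < j + a by positivity)
    have := Real.Gamma_pos_of_pos (show (0 : ℝ) < j + 1 by positivity)
    simp only [hc]; positivity
  let F : ℕ → ℝ → ℝ := fun j x => c j * (x ^ (((j + h : ℕ) + b : ℝ) - 1) * (1 - x) ^ ((1 - b) - 1))
  let f : ℝ → ℝ := fun x => x ^ ((b + h : ℝ) - 1) * (1 - x) ^ ((1 - a - b) - 1)
  have hsum : ∀ x ∈ Set.Ioo (0 : ℝ) 1, HasSum (fun j => F j x) (f x) := by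
    intro x ⟨hx0, hx1⟩
    have h1 := (aux_binom a ha x hx0 hx1).mul_right (x ^ ((b + h : ℝ) - 1) * (1 - x) ^ ((1 - b) - 1))
    have e1 : (fun j => F j x) = fun j : ℕ => Real.Gamma (j + a) /
        (Real.Gamma (j + 1) * Real.Gamma a) * x ^ j *
        (x ^ ((b + h : ℝ) - 1) * (1 - x) ^ ((1 - b) - 1)) := by
      funext j
      simp only [F, hc]
      rw [show (((j + h : ℕ) + b : ℝ) - 1) = j + ((b + h : ℝ) - 1) by push_cast; ring,
        Real.rpow_add hx0, Real.rpow_natCast]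
      ring
    have e2 : f x = (1 - x) ^ (-a) * (x ^ ((b + h : ℝ) - 1) * (1 - x) ^ ((1 - b) - 1)) := by
      simp only [f]
      rw [show (1 - a - b) - 1 = -a + ((1 - b) - 1) by ring, Real.rpow_add (by linarith : 0 < 1 - x)]
      ring
    rw [e1, e2]
    exact h1
  have hFint : ∀ j, MeasureTheory.IntegrableOn (F j) (Set.Ioo 0 1) := fun j =>
    (aux_beta_integrable ((j + h : ℕ) + b) (1 - b) (by positivity) (by linarith)).1.const_mul _
  have hf := aux_beta_integrable (b + h) (1 - a - b) (by positivity) (by linarith)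
  have hmain := MeasureTheory.hasSum_integral_of_dominated_convergence
    (μ := MeasureTheory.volume.restrict (Set.Ioo (0 : ℝ) 1)) (F := F) (f := f) F
    (fun n => (hFint n).aestronglyMeasurable)
    (fun n => MeasureTheory.ae_restrict_of_forall_mem measurableSet_Ioo (fun x hx => by
      have h1 : 0 ≤ F n x := mul_nonneg (hc0 n) (mul_nonneg (Real.rpow_nonneg hx.1.le _)
        (Real.rpow_nonneg (by linarith [hx.2]) _))
      rw [Real.norm_of_nonneg h1]))
    (MeasureTheory.ae_restrict_of_forall_mem measurableSet_Ioo fun x hx => (hsum x hx).summable)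
    ((MeasureTheory.integrableOn_congr_fun (fun x hx => ((hsum x hx).tsum_eq).symm)
      measurableSet_Ioo).1 hf.1)
    (MeasureTheory.ae_restrict_of_forall_mem measurableSet_Ioo hsum)
  have hfi : ∫ x in Set.Ioo (0 : ℝ) 1, f x = _ := hf.2
  rw [hfi] at hmain
  have hFi : ∀ j, ∫ x in Set.Ioo (0 : ℝ) 1, F j x = c j * (Real.Gamma ((j + h : ℕ) + b) *
      Real.Gamma (1 - b) / Real.Gamma ((j + h : ℕ) + 1)) := fun j => by
    simp only [F]
    rw [MeasureTheory.integral_const_mul, (aux_beta_integrable ((j + h : ℕ) + b) (1 - b)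
      (by positivity) (by linarith)).2]
    congr 3
    ring
  simp only [hFi] at hmain
  have h3 := (hmain.div_const (Real.Gamma (1 - b) * Real.Gamma b)).tsum_eq
  rw [show (b + h : ℝ) + (1 - a - b) = 1 + h - a by ring] at h3
  trans
  swap
  · trans
    · exact h3
    · rw [div_div]; congr 1 <;> ring
  · refine tsum_congr fun j => ?_
    change c j * _ = _
    field_simp

lemma aux_per (d : ℤ → ℝ) (hper : ∀ t : ℤ, d (t + 2) = d t) (t : ℤ) (k : ℕ) :
    d (t + 2 * k) = d t := by
  induction k with
  | zero => simp
  | succ k ih => rw [← ih, ← hper (t + 2 * k)]; push_cast; ring_nf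

/-- Proposition 3.1, period-2 autocovariance: Let `d : ℤ → ℝ` be
2-periodic with `0 < d_t < 1/2`, let `σ_i > 0`, and for `i ∈ {1, 2}` and natural `h`
let `γ_X^i(h) = σ_i² ∑_{j=0}^∞ ψ_j(d_i)·ψ_{j+h}(d_{i+h})`.
Then `γ_X^i(h)` equals the stated closed form, depending on the parity of `h`. -/
theorem period_two_autocovariance
    (d : ℤ → ℝ) (hper : ∀ t : ℤ, d (t + 2) = d t)
    (hd0 : ∀ t : ℤ, 0 < d t) (hd : ∀ t : ℤ, d t < 1/2)
    (σ : ℤ → ℝ) (hσ : ∀ i : ℤ, i = 1 ∨ i = 2 → 0 < σ i)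
    (γ : ℤ → ℕ → ℝ)
    (hγ : ∀ (i : ℤ) (h : ℕ), γ i h = σ i ^ 2 * ∑' j : ℕ,
      (Real.Gamma (j + d i) / (Real.Gamma (j + 1) * Real.Gamma (d i))) *
        (Real.Gamma ((j + h : ℕ) + d (i + h)) /
          (Real.Gamma ((j + h : ℕ) + 1) * Real.Gamma (d (i + h))))) :
    ∀ (i : ℤ), i = 1 ∨ i = 2 → ∀ (h : ℕ),
      (Odd h → γ i h = σ i ^ 2 *
        (Real.Gamma (1 - d i - d (i + 1)) * Real.Gamma (d (i + 1) + h) /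
          (Real.Gamma (d (i + 1)) * Real.Gamma (1 - d (i + 1)) *
            Real.Gamma (1 + h - d i)))) ∧
      (Even h → γ i h = σ i ^ 2 *
        (Real.Gamma (1 - 2 * d i) * Real.Gamma (d i + h) /
          (Real.Gamma (d i) * Real.Gamma (1 - d i) * Real.Gamma (1 + h - d i)))) := by
  intro i _ h
  refine ⟨fun ho => ?_, fun he => ?_⟩
  · obtain ⟨k, rfl⟩ := ho
    have hd' : d (i + ((2 * k + 1 : ℕ) : ℤ)) = d (i + 1) := by
      rw [← aux_per d hper (i + 1) k]; congr 1; push_cast; ring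
    rw [hγ, hd', aux_main _ _ (hd0 _) (hd0 _) (hd _) (hd _)]
  · obtain ⟨k, rfl⟩ := he
    have hd' : d (i + ((k + k : ℕ) : ℤ)) = d i := by
      rw [← aux_per d hper i k]; congr 1; push_cast; ring
    rw [hγ, hd', aux_main _ _ (hd0 _) (hd0 _) (hd _) (hd _), show 1 - d i - d i = 1 - 2 * d i by ring]
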